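/- The CHSH Bell inequality: for every classical (2,2,2) probability table P, the CHSH value satisfies −2 ≤ E(P) ≤ 2. -/

import Mathlib

/-- The outcome value: `true` denotes `+1`, `false` denotes `-1`. -/
noncomputable def sgn (a : Bool) : ℝ := if a then 1 else -1

/-- A (2,2,2) probability table: inputs `x y : Bool`, outcomes `a b : Bool`,
with nonnegative entries that sum to one for every choice of inputs. -/
def IsProbTable (P : Bool → Bool → Bool → Bool → ℝ) : Prop :=
  (∀ a b x y, 0 ≤ P a b x y) ∧ ∀ x y, ∑ a : Bool, ∑ b : Bool, P a b x y = 1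

/-- A probability table is classical if it admits a local hidden-variable model. -/
def IsClassical (P : Bool → Bool → Bool → Bool → ℝ) : Prop :=
  ∃ (n : ℕ), 0 < n ∧
    ∃ (q : Fin n → ℝ) (PA : Bool → Bool → Fin n → ℝ) (PB : Bool → Bool → Fin n → ℝ),
      (∀ l, 0 ≤ q l) ∧ (∑ l, q l) = 1 ∧
      (∀ a x l, 0 ≤ PA a x l) ∧ (∀ x l, ∑ a : Bool, PA a x l = 1) ∧
      (∀ b y l, 0 ≤ PB b y l) ∧ (∀ y l, ∑ b : Bool, PB b y l = 1) ∧
      (∀ a b x y, P a b x y = ∑ l, q l * PA a x l * PB b y l)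

/-- The correlator `E_{x,y}(P) = ∑_{a,b} a·b·P(a,b|x,y)`. -/
noncomputable def correlator (P : Bool → Bool → Bool → Bool → ℝ) (x y : Bool) : ℝ :=
  ∑ a : Bool, ∑ b : Bool, sgn a * sgn b * P a b x y

/-- The CHSH value `E(P) = E_{0,0} + E_{0,1} + E_{1,0} − E_{1,1}`. -/
noncomputable def chsh (P : Bool → Bool → Bool → Bool → ℝ) : ℝ :=
  correlator P false false + correlator P false true +
    correlator P true false - correlator P true true

/-!
The CHSH value is linear in the table, and a classical table is a convex combination of product
tables, so it suffices to bound the CHSH value of a product table. There each correlator is a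
product `αₓ βᵧ` of one-party means in `[-1, 1]`, and
`α₀ β₀ + α₀ β₁ + α₁ β₀ - α₁ β₁ = α₀ (β₀ + β₁) + α₁ (β₀ - β₁)` is at most `|β₀ + β₁| + |β₀ - β₁| ≤ 2`
in absolute value.
-/

theorem abs_add_add_abs_sub_le_two_nsmul {G : Type*} [AddCommGroup G] [LinearOrder G]
    [IsOrderedAddMonoid G] {a b c : G} (ha : |a| ≤ c) (hb : |b| ≤ c) :
    |a + b| + |a - b| ≤ 2 • c := by
  rw [abs_le] at ha hb
  rcases abs_cases (a + b) with h | h <;> rcases abs_cases (a - b) with h' | h' <;> grind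

theorem abs_mul_add_add_mul_sub_le {R : Type*} [Ring R] [LinearOrder R] [IsOrderedRing R]
    {a₀ a₁ b₀ b₁ c d : R} (ha₀ : |a₀| ≤ c) (ha₁ : |a₁| ≤ c) (hb₀ : |b₀| ≤ d)
    (hb₁ : |b₁| ≤ d) : |a₀ * (b₀ + b₁) + a₁ * (b₀ - b₁)| ≤ c * (2 * d) := by
  have hc : 0 ≤ c := (abs_nonneg a₀).trans ha₀
  calc |a₀ * (b₀ + b₁) + a₁ * (b₀ - b₁)|
      ≤ |a₀| * |b₀ + b₁| + |a₁| * |b₀ - b₁| := by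
        simpa only [abs_mul] using abs_add_le (a₀ * (b₀ + b₁)) (a₁ * (b₀ - b₁))
    _ ≤ c * |b₀ + b₁| + c * |b₀ - b₁| := by gcongr
    _ = c * (|b₀ + b₁| + |b₀ - b₁|) := (mul_add _ _ _).symm
    _ ≤ c * (2 * d) := by
        gcongr
        simpa only [nsmul_eq_mul, Nat.cast_ofNat] using abs_add_add_abs_sub_le_two_nsmul hb₀ hb₁

theorem abs_sgn (a : Bool) : |sgn a| = 1 := by
  cases a <;> simp [sgn]

/-- The mean of a `±1`-valued outcome with weights `p`, the one-party analogue of `correlator`. -/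
noncomputable def outcomeMean (p : Bool → ℝ) : ℝ :=
  ∑ a, sgn a * p a

theorem abs_outcomeMean_le_one {p : Bool → ℝ} (hp : ∀ a, 0 ≤ p a) (hp_sum : ∑ a, p a = 1) :
    |outcomeMean p| ≤ 1 :=
  calc |outcomeMean p| ≤ ∑ a, |sgn a * p a| := Finset.abs_sum_le_sum_abs _ _
    _ = ∑ a, p a := by simp only [abs_mul, abs_sgn, one_mul, abs_of_nonneg (hp _)]
    _ = 1 := hp_sum

/-- The table of two parties responding independently, with response functions `A a x = P_A(a|x)`
and `B b y = P_B(b|y)`: a hidden-variable model with a single hidden state. -/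
def productTable (A B : Bool → Bool → ℝ) : Bool → Bool → Bool → Bool → ℝ :=
  fun a b x y ↦ A a x * B b y

theorem correlator_productTable (A B : Bool → Bool → ℝ) (x y : Bool) :
    correlator (productTable A B) x y = outcomeMean (A · x) * outcomeMean (B · y) := by
  simp only [correlator, productTable, outcomeMean, Finset.sum_mul_sum, mul_mul_mul_comm]

theorem abs_chsh_productTable_le_two {A B : Bool → Bool → ℝ}
    (hA : ∀ a x, 0 ≤ A a x) (hA_sum : ∀ x, ∑ a, A a x = 1)
    (hB : ∀ b y, 0 ≤ B b y) (hB_sum : ∀ y, ∑ b, B b y = 1) :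
    |chsh (productTable A B)| ≤ 2 := by
  have hα (x : Bool) : |outcomeMean (A · x)| ≤ 1 := abs_outcomeMean_le_one (hA · x) (hA_sum x)
  have hβ (y : Bool) : |outcomeMean (B · y)| ≤ 1 := abs_outcomeMean_le_one (hB · y) (hB_sum y)
  have h_bound := abs_mul_add_add_mul_sub_le (hα false) (hα true) (hβ false) (hβ true)
  simpa only [chsh, correlator_productTable, mul_add, mul_sub, add_sub_assoc, one_mul, mul_one]
    using h_bound

theorem isLinearMap_correlator (x y : Bool) : IsLinearMap ℝ (correlator · x y) where
  map_add P Q := by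
    simp only [correlator, Pi.add_apply, mul_add, Finset.sum_add_distrib]
  map_smul c P := by
    simp only [correlator, Pi.smul_apply, smul_eq_mul, Finset.mul_sum, mul_left_comm c]

theorem isLinearMap_chsh : IsLinearMap ℝ chsh where
  map_add P Q := by
    simp only [chsh, (isLinearMap_correlator _ _).map_add]
    ring
  map_smul c P := by
    simp only [chsh, (isLinearMap_correlator _ _).map_smul, smul_add, smul_sub]

/-- the CHSH Bell inequality `−2 ≤ E(P) ≤ 2` for classical tables. -/
theorem chsh_inequality_classical
    (P : Bool → Bool → Bool → Bool → ℝ) (hP : IsProbTable P)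
    (hC : IsClassical P) : -2 ≤ chsh P ∧ chsh P ≤ 2 := by
  obtain ⟨n, -, q, PA, PB, hq, hq_sum, hA, hA_sum, hB, hB_sum, hP_eq⟩ := hC
  let Q (l : Fin n) := productTable (PA · · l) (PB · · l)
  have hPQ : P = ∑ l, q l • Q l := by
    ext a b x y
    simp only [hP_eq, Q, productTable, Finset.sum_apply, Pi.smul_apply, smul_eq_mul, mul_assoc]
  have hQ (l : Fin n) : chsh (Q l) ∈ Set.Icc (-2) 2 :=
    abs_le.mp <| abs_chsh_productTable_le_two (hA · · l) (hA_sum · l) (hB · · l) (hB_sum · l)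
  have h_convex : Convex ℝ (chsh ⁻¹' Set.Icc (-2) 2) :=
    (convex_Icc (-2) 2).is_linear_preimage isLinearMap_chsh
  rw [hPQ]
  exact h_convex.sum_mem (fun l _ ↦ hq l) hq_sum (fun l _ ↦ hQ l)
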